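/- arXiv:1909.03388 — 7 statements merged into one kernel-verified Lean document; each statement's English description precedes it below -/
import Mathlib

section
/- Let C ≥ 1 and let p : Fin C × Fin C × Fin C → ℝ be a nonnegative function with total sum 1, viewed as the joint distribution of a triple of random variables (W2, W1, W3). Suppose there is a row-stochastic C×C real matrix T such that p(w2, w1, w3) = (∑_{w} p(w2, w1, w)) · T(w1, w3) for all w2, w1, w3. Define Q23(w2, w3) = ∑_{w1} p(w2, w1, w3) and Q21(w2, w1) = ∑_{w3} p(w2, w1, w3). Then |det(Q23)| = |det(Q21)| · |det(T)| (relative invariance of DMI). -/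
theorem firstThirdMarginal_eq_firstSecondMarginal_mul
    {α β γ R : Type*} [Fintype β] [Fintype γ] [Mul R] [AddCommMonoid R]
    (p : α × β × γ → R) (T : Matrix β γ R)
    (hfact : ∀ a b c, p (a, b, c) = (∑ c', p (a, b, c')) * T b c) :
    Matrix.of (fun a c => ∑ b, p (a, b, c)) =
      Matrix.of (fun a b => ∑ c, p (a, b, c)) * T := by
  ext a c
  calc
    ∑ b, p (a, b, c) = ∑ b, (∑ c', p (a, b, c')) * T b c :=
      Finset.sum_congr rfl fun b _ => hfact a b c
    _ = (Matrix.of (fun a b => ∑ c, p (a, b, c)) * T) a c := by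
      simp only [Matrix.mul_apply, Matrix.of_apply]

theorem stmt_1_general {ι R : Type*} [Fintype ι] [DecidableEq ι] [CommRing R]
    (p : ι × ι × ι → R) (T : Matrix ι ι R)
    (hfact : ∀ w2 w1 w3, p (w2, w1, w3) = (∑ w, p (w2, w1, w)) * T w1 w3) :
    (Matrix.of fun w2 w3 => ∑ w1, p (w2, w1, w3)).det =
      (Matrix.of fun w2 w1 => ∑ w3, p (w2, w1, w3)).det * T.det := by
  rw [firstThirdMarginal_eq_firstSecondMarginal_mul p T hfact, Matrix.det_mul]

theorem stmt_1 (C : ℕ) (hC : 1 ≤ C)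
    (p : Fin C × Fin C × Fin C → ℝ)
    (hp_nonneg : ∀ w, 0 ≤ p w)
    (hp_sum : ∑ w, p w = 1)
    (T : Matrix (Fin C) (Fin C) ℝ)
    (hT_nonneg : ∀ i j, 0 ≤ T i j)
    (hT_row : ∀ i, ∑ j, T i j = 1)
    (hfact : ∀ w2 w1 w3, p (w2, w1, w3) = (∑ w, p (w2, w1, w)) * T w1 w3) :
    |(Matrix.of fun w2 w3 => ∑ w1, p (w2, w1, w3)).det| =
      |(Matrix.of fun w2 w1 => ∑ w3, p (w2, w1, w3)).det| * |T.det| := by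
  rw [stmt_1_general p T hfact, abs_mul]
end

section
/- Let C ≥ 1 and let p : Fin C × Fin C × Fin C → ℝ be a nonnegative function with total sum 1, viewed as the joint distribution of a triple of random variables (W2, W1, W3). Suppose there is a row-stochastic C×C real matrix T such that p(w2, w1, w3) = (∑_{w} p(w2, w1, w)) · T(w1, w3) for all w2, w1, w3. Define Q23(w2, w3) = ∑_{w1} p(w2, w1, w3) and Q21(w2, w1) = ∑_{w3} p(w2, w1, w3). Then |det(Q23)| ≤ |det(Q21)| (information-monotonicity of DMI). -/
/-!
Conditional independence says that the joint matrix `Q23` factors as `Q21 * T`, so by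
multiplicativity of the determinant it suffices that `|det T| ≤ 1`. Expanding the product of the
row sums of `|T|` gives one nonnegative term for each function from rows to columns; the terms
coming from permutations make up the permanent of `|T|`, which bounds `|det T|`.
-/

open Matrix

theorem permanent_le_prod_sum_row {n R : Type*} [Fintype n] [DecidableEq n] [CommSemiring R]
    [PartialOrder R] [IsOrderedRing R] {A : Matrix n n R} (hA : ∀ i j, 0 ≤ A i j) :
    A.permanent ≤ ∏ i, ∑ j, A i j := by
  calc
    A.permanent = ∑ σ : Equiv.Perm n, ∏ i, A i (σ i) := by
      rw [← permanent_transpose]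
      simp only [permanent, transpose_apply]
    _ = ∑ f ∈ Finset.univ.map ⟨((⇑) : Equiv.Perm n → n → n), DFunLike.coe_injective⟩,
          ∏ i, A i (f i) := by
      simp only [Finset.sum_map, Function.Embedding.coeFn_mk]
    _ ≤ ∑ f : n → n, ∏ i, A i (f i) :=
      Finset.sum_le_univ_sum_of_nonneg fun f ↦ Finset.prod_nonneg fun i _ ↦ hA i (f i)
    _ = ∏ i, ∑ j, A i j := (Fintype.prod_sum A).symm

theorem marginal_eq_marginal_mul_of_factorization {l m n R : Type*} [Fintype m] [Fintype n]
    [NonUnitalNonAssocSemiring R] {p : l × m × n → R} {T : Matrix m n R}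
    (hfact : ∀ a b c, p (a, b, c) = (∑ c', p (a, b, c')) * T b c) :
    (of fun a c ↦ ∑ b, p (a, b, c)) = (of fun a b ↦ ∑ c, p (a, b, c)) * T := by
  ext a c
  exact Finset.sum_congr rfl fun b _ ↦ hfact a b c

section AbsoluteValue

variable {n R S : Type*} [Fintype n] [DecidableEq n] [CommRing R] [Nontrivial R]
  [CommRing S] [LinearOrder S] [IsStrictOrderedRing S] (abv : AbsoluteValue R S)

theorem abv_det_le_permanent_map (A : Matrix n n R) : abv A.det ≤ (A.map abv).permanent := by
  calc
    abv A.det ≤ ∑ σ : Equiv.Perm n, abv (Equiv.Perm.sign σ • ∏ i, A (σ i) i) := by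
      rw [det_apply]
      exact abv.sum_le _ _
    _ = (A.map abv).permanent :=
      Finset.sum_congr rfl fun σ _ ↦ by
        simp only [abv.map_units_int_smul, map_prod, map_apply]

theorem abv_det_le_prod_sum_row (A : Matrix n n R) : abv A.det ≤ ∏ i, ∑ j, abv (A i j) :=
  (abv_det_le_permanent_map abv A).trans (permanent_le_prod_sum_row fun i j ↦ abv.nonneg (A i j))

theorem abv_det_mul_le_of_sum_row_le_one (Q : Matrix n n R) {T : Matrix n n R}
    (hT : ∀ i, ∑ j, abv (T i j) ≤ 1) : abv (Q * T).det ≤ abv Q.det := by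
  have det_T_le_one : abv T.det ≤ 1 :=
    (abv_det_le_prod_sum_row abv T).trans <|
      Finset.prod_le_one (fun i _ ↦ Finset.sum_nonneg fun j _ ↦ abv.nonneg (T i j)) fun i _ ↦ hT i
  rw [det_mul, map_mul]
  exact mul_le_of_le_one_right (abv.nonneg Q.det) det_T_le_one

theorem stmt_3_general (p : n × n × n → R) (T : Matrix n n R)
    (hT : ∀ i, ∑ j, abv (T i j) ≤ 1)
    (hfact : ∀ w2 w1 w3, p (w2, w1, w3) = (∑ w, p (w2, w1, w)) * T w1 w3) :
    abv (of fun w2 w3 ↦ ∑ w1, p (w2, w1, w3)).det ≤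
      abv (of fun w2 w1 ↦ ∑ w3, p (w2, w1, w3)).det := by
  rw [marginal_eq_marginal_mul_of_factorization hfact]
  exact abv_det_mul_le_of_sum_row_le_one abv _ hT

end AbsoluteValue

theorem stmt_3 (C : ℕ) (hC : 1 ≤ C)
    (p : Fin C × Fin C × Fin C → ℝ)
    (hp_nonneg : ∀ w, 0 ≤ p w)
    (hp_sum : ∑ w, p w = 1)
    (T : Matrix (Fin C) (Fin C) ℝ)
    (hT_nonneg : ∀ i j, 0 ≤ T i j)
    (hT_row : ∀ i, ∑ j, T i j = 1)
    (hfact : ∀ w2 w1 w3, p (w2, w1, w3) = (∑ w, p (w2, w1, w)) * T w1 w3) :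
    |(Matrix.of fun w2 w3 => ∑ w1, p (w2, w1, w3)).det| ≤
      |(Matrix.of fun w2 w1 => ∑ w3, p (w2, w1, w3)).det| :=
  stmt_3_general AbsoluteValue.abs p T
    (fun i ↦ by simp [abs_of_nonneg (hT_nonneg i _), hT_row]) hfact
end

section
/- Let T be a C×C real matrix with nonnegative entries such that every row of T sums to 1. Then |det(T)| = 1 if and only if T is a permutation matrix, i.e., there exists a permutation σ of Fin C such that T(i, j) = 1 if j = σ(i) and T(i, j) = 0 otherwise. -/
/-!
Expanding the product of the row sums of a nonnegative matrix `A` gives one term `∏ i, A i (f i)`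
for every map `f`, and the permanent collects the terms in which `f` is a permutation. Hence the
norm of `det M` is at most the permanent of the matrix of norms, which is at most the product of
the row sums of norms. If the ends of this chain agree, all terms with `f` not injective vanish.
Changing a permutation `σ` with nonzero term at a single index yields such an `f`, so `σ i` is the
only position in row `i` with a nonzero entry.
-/

open Equiv Finset Function Matrix

theorem eq_one_of_prod_eq_one {ι R : Type*} [CommSemiring R] [PartialOrder R] [IsOrderedRing R]
    {s : Finset ι} {f : ι → R} (h_nonneg : ∀ i ∈ s, 0 ≤ f i) (h_le_one : ∀ i ∈ s, f i ≤ 1)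
    (h_prod : ∏ i ∈ s, f i = 1) {i : ι} (hi : i ∈ s) : f i = 1 := by
  classical
  refine (h_le_one i hi).antisymm ?_
  rw [← h_prod, ← mul_prod_erase s f hi]
  exact mul_le_of_le_one_right (h_nonneg i hi) <| prod_le_one
    (fun j hj => h_nonneg j (mem_of_mem_erase hj)) (fun j hj => h_le_one j (mem_of_mem_erase hj))

theorem not_injective_update_of_surjective {α β : Type*} [DecidableEq α] {f : α → β}
    (hf : Surjective f) {a : α} {b : β} (hb : b ≠ f a) : ¬ Injective (update f a b) := by
  obtain ⟨a', rfl⟩ := hf b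
  have ha' : a' ≠ a := fun h => hb (congrArg f h)
  exact fun h_inj => ha' (h_inj (by rw [update_self, update_of_ne ha']))

variable {n : Type*} [Fintype n] [DecidableEq n]

section Permanent

variable {R : Type*} [CommSemiring R]

theorem permanent_eq_sum_prod_apply (A : Matrix n n R) :
    A.permanent = ∑ σ : Perm n, ∏ i, A i (σ i) :=
  (permanent_transpose A).symm

theorem exists_perm_forall_apply_ne_zero {A : Matrix n n R} (h : A.permanent ≠ 0) :
    ∃ σ : Perm n, ∀ i, A i (σ i) ≠ 0 := by
  rw [permanent_eq_sum_prod_apply] at h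
  obtain ⟨σ, -, hσ⟩ := exists_ne_zero_of_sum_ne_zero h
  exact ⟨σ, fun i hi => hσ (prod_eq_zero (mem_univ i) hi)⟩

variable [PartialOrder R]

theorem permanent_add_prod_le_prod_sum [IsOrderedRing R] {A : Matrix n n R}
    (hA : ∀ i j, 0 ≤ A i j) {f : n → n} (hf : ¬ Injective f) :
    A.permanent + ∏ i, A i (f i) ≤ ∏ i, ∑ j, A i j := by
  let perms : Finset (n → n) := univ.map ⟨fun σ : Perm n => ⇑σ, DFunLike.coe_injective⟩
  have hf_notMem : f ∉ perms := fun h => by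
    obtain ⟨σ, -, rfl⟩ := mem_map.1 h
    exact hf σ.injective
  calc A.permanent + ∏ i, A i (f i)
      = ∑ g ∈ insert f perms, ∏ i, A i (g i) := by
        rw [sum_insert hf_notMem, sum_map, permanent_eq_sum_prod_apply, add_comm]; rfl
    _ ≤ ∑ g : n → n, ∏ i, A i (g i) :=
        sum_le_univ_sum_of_nonneg fun g => prod_nonneg fun i _ => hA i (g i)
    _ = ∏ i, ∑ j, A i j := (Fintype.prod_sum fun i j => A i j).symm

theorem apply_eq_zero_of_prod_sum_le_permanent [IsStrictOrderedRing R] [NoZeroDivisors R]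
    {A : Matrix n n R} (hA : ∀ i j, 0 ≤ A i j) (h : ∏ i, ∑ j, A i j ≤ A.permanent)
    {σ : Perm n} (hσ : ∀ i, A i (σ i) ≠ 0) {i j : n} (hj : j ≠ σ i) : A i j = 0 := by
  let f := update σ i j
  have hf : ¬ Injective f := not_injective_update_of_surjective σ.surjective hj
  have h_prod : ∏ k, A k (f k) = 0 := by
    refine le_antisymm ?_ (prod_nonneg fun k _ => hA k (f k))
    exact nonpos_of_add_le_right ((permanent_add_prod_le_prod_sum hA hf).trans h)
  obtain ⟨k, -, hk⟩ := prod_eq_zero_iff.1 h_prod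
  obtain rfl | hki := eq_or_ne k i
  · simpa only [f, update_self] using hk
  · exact absurd (by simpa only [f, update_of_ne hki] using hk) (hσ k)

end Permanent

theorem det_eq_sign_mul_prod_of_apply_eq_zero {R : Type*} [CommRing R] {M : Matrix n n R}
    {σ : Perm n} (h : ∀ i j, j ≠ σ i → M i j = 0) :
    M.det = Perm.sign σ * ∏ i, M i (σ i) := by
  have hM : M = diagonal (fun i => M i (σ i)) * σ.permMatrix R := by
    ext i j
    rw [diagonal_mul, Perm.permMatrix, PEquiv.toMatrix_toPEquiv_apply]
    obtain rfl | hj := eq_or_ne j (σ i)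
    · simp
    · simp [h i j hj, hj.symm]
  conv_lhs => rw [hM, det_mul, det_diagonal, det_permutation, mul_comm]

section Norm

theorem norm_sign_eq_one {R : Type*} [SeminormedRing R] [NormOneClass R] (σ : Perm n) :
    ‖((Perm.sign σ : ℤ) : R)‖ = 1 := by
  obtain hσ | hσ := Int.units_eq_one_or (Perm.sign σ) <;> simp [hσ]

variable {R : Type*} [NormedCommRing R] [NormOneClass R]

theorem norm_det_le_permanent_map_norm (M : Matrix n n R) :
    ‖M.det‖ ≤ (M.map norm).permanent := by
  rw [det_apply']
  refine (norm_sum_le _ _).trans (sum_le_sum fun σ _ => (norm_mul_le _ _).trans ?_)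
  rw [norm_sign_eq_one, one_mul]
  exact Finset.norm_prod_le univ fun i => M (σ i) i

theorem norm_det_eq_prod_norm_of_apply_eq_zero [NormMulClass R] {M : Matrix n n R}
    {σ : Perm n} (h : ∀ i j, j ≠ σ i → M i j = 0) : ‖M.det‖ = ∏ i, ‖M i (σ i)‖ := by
  rw [det_eq_sign_mul_prod_of_apply_eq_zero h, norm_mul, norm_sign_eq_one, one_mul, norm_prod]

theorem exists_perm_forall_apply_eq_zero_of_norm_det_eq_one {M : Matrix n n R}
    (hM : ∀ i, ∑ j, ‖M i j‖ ≤ 1) (h_det : ‖M.det‖ = 1) :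
    ∃ σ : Perm n, ∀ i j, j ≠ σ i → M i j = 0 := by
  have h_perm : 1 ≤ (M.map norm).permanent := h_det ▸ norm_det_le_permanent_map_norm M
  have h_sum : ∏ i, ∑ j, ‖M i j‖ ≤ 1 :=
    prod_le_one (fun i _ => sum_nonneg fun j _ => norm_nonneg (M i j)) fun i _ => hM i
  obtain ⟨σ, hσ⟩ := exists_perm_forall_apply_ne_zero (zero_lt_one.trans_le h_perm).ne'
  exact ⟨σ, fun i j hj => norm_eq_zero.1 <| apply_eq_zero_of_prod_sum_le_permanent
    (fun i j => norm_nonneg (M i j)) (h_sum.trans h_perm) hσ hj⟩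

theorem stmt_4_general [NormMulClass R] {M : Matrix n n R} (hM : ∀ i, ∑ j, ‖M i j‖ ≤ 1) :
    ‖M.det‖ = 1 ↔ ∃ σ : Perm n, ∀ i j, ‖M i j‖ = if j = σ i then 1 else 0 := by
  constructor
  · intro h_det
    obtain ⟨σ, hσ⟩ := exists_perm_forall_apply_eq_zero_of_norm_det_eq_one hM h_det
    have h_le_one (i : n) : ‖M i (σ i)‖ ≤ 1 :=
      (single_le_sum (fun j _ => norm_nonneg (M i j)) (mem_univ (σ i))).trans (hM i)
    have h_one (i : n) : ‖M i (σ i)‖ = 1 :=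
      eq_one_of_prod_eq_one (fun i _ => norm_nonneg (M i (σ i))) (fun i _ => h_le_one i)
        ((norm_det_eq_prod_norm_of_apply_eq_zero hσ).symm.trans h_det) (mem_univ i)
    refine ⟨σ, fun i j => ?_⟩
    split_ifs with hj
    · rw [hj, h_one]
    · rw [hσ i j hj, norm_zero]
  · rintro ⟨σ, hσ⟩
    have h_zero (i j : n) (hj : j ≠ σ i) : M i j = 0 := norm_eq_zero.1 (by rw [hσ, if_neg hj])
    rw [norm_det_eq_prod_norm_of_apply_eq_zero h_zero]
    exact prod_eq_one fun i _ => by rw [hσ, if_pos rfl]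

end Norm

theorem stmt_4 (C : ℕ) (T : Matrix (Fin C) (Fin C) ℝ)
    (hT_nonneg : ∀ i j, 0 ≤ T i j)
    (hT_row : ∀ i, ∑ j, T i j = 1) :
    |T.det| = 1 ↔
      ∃ σ : Equiv.Perm (Fin C), ∀ i j, T i j = if j = σ i then 1 else 0 := by
  have h_norm (i j : Fin C) : ‖T i j‖ = T i j := Real.norm_of_nonneg (hT_nonneg i j)
  simpa only [h_norm, Real.norm_eq_abs] using stmt_4_general (M := T) (by simp [h_norm, hT_row])
end

section
/- Let Q be a C×C real matrix with nonnegative entries whose column sums d(y) = ∑_c Q(c, y) are all strictly positive. Then |det(Q)| = ∏_y d(y) if and only if there exists a permutation σ of Fin C such that Q(c, y) = d(y) if c = σ(y) and Q(c, y) = 0 otherwise. -/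
/-!
Expanding `∏ y, ∑ c, Q c y` gives one nonnegative product `∏ y, Q (f y) y` for each map `f`. The
bijective `f` contribute the permanent of `Q`, which dominates `|det Q|`. So if `|det Q|` equals the
product of the column sums, every `f` picking a positive entry from each column is injective.
Changing such an `f` in a single column keeps it injective only if nothing changes, hence each
column has exactly one positive entry.
-/

theorem exists_perm_iff_eq_of_selections_injective {α : Type*} [Finite α] {r : α → α → Prop}
    (hr : ∀ y, ∃ c, r c y)
    (hinj : ∀ f : α → α, (∀ y, r (f y) y) → Function.Injective f) :
    ∃ σ : Equiv.Perm α, ∀ c y, r c y ↔ c = σ y := by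
  classical
  choose f hf using hr
  have hbij : Function.Bijective f := Finite.injective_iff_bijective.mp (hinj f hf)
  refine ⟨Equiv.ofBijective f hbij, fun c y => ⟨fun hc => ?_, fun hc => hc ▸ hf y⟩⟩
  obtain ⟨z, rfl⟩ := hbij.surjective c
  have hupdate : Function.Injective (Function.update f y (f z)) := by
    refine hinj _ fun x => ?_
    obtain rfl | hxy := eq_or_ne x y
    · simpa using hc
    · simpa [hxy] using hf x
  have hzy : z = y := by
    by_contra hne
    exact hne (hupdate (by simp [hne]))
  exact congrArg f hzy

section Permanent

variable {n R : Type*} [Fintype n] [DecidableEq n]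

theorem prod_sum_eq_permanent_add_sum_not_injective [CommSemiring R] (A : Matrix n n R) :
    ∏ y, ∑ c, A c y = A.permanent + ∑ f : n → n with ¬ Function.Injective f, ∏ y, A (f y) y := by
  have hperm : A.permanent = ∑ f : n → n with Function.Injective f, ∏ y, A (f y) y :=
    Finset.sum_nbij (fun σ : Equiv.Perm n => ⇑σ) (fun σ _ => by simp [σ.injective])
      DFunLike.coe_injective.injOn
      (fun f hf => ⟨Equiv.ofBijective f (Finite.injective_iff_bijective.mp (by simpa using hf)),
        Finset.mem_univ _, rfl⟩)
      (fun _ _ => rfl)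
  rw [hperm, Finset.sum_filter_add_sum_filter_not, Fintype.prod_sum]

theorem injective_of_prod_sum_le_permanent [CommSemiring R] [PartialOrder R]
    [IsStrictOrderedRing R] {A : Matrix n n R} (hA : ∀ c y, 0 ≤ A c y)
    (hle : ∏ y, ∑ c, A c y ≤ A.permanent) {f : n → n} (hf : ∀ y, 0 < A (f y) y) :
    Function.Injective f := by
  by_contra hninj
  have hsum_pos : 0 < ∑ g : n → n with ¬ Function.Injective g, ∏ y, A (g y) y :=
    Finset.sum_pos' (fun g _ => Finset.prod_nonneg fun y _ => hA (g y) y)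
      ⟨f, by simpa using hninj, Finset.prod_pos fun y _ => hf y⟩
  rw [prod_sum_eq_permanent_add_sum_not_injective] at hle
  exact hle.not_gt (lt_add_of_pos_right _ hsum_pos)

variable [CommRing R] [LinearOrder R] [IsStrictOrderedRing R]

theorem abs_det_le_permanent_abs (A : Matrix n n R) : |A.det| ≤ (A.map abs).permanent := by
  rw [Matrix.det_apply']
  refine (Finset.abs_sum_le_sum_abs _ _).trans_eq (Finset.sum_congr rfl fun σ _ => ?_)
  rw [abs_mul, abs_unit_intCast, one_mul, Finset.abs_prod]
  rfl

theorem abs_det_le_permanent_of_nonneg {A : Matrix n n R} (hA : ∀ c y, 0 ≤ A c y) :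
    |A.det| ≤ A.permanent := by
  have hmap : A.map abs = A := Matrix.ext fun c y => abs_of_nonneg (hA c y)
  simpa only [hmap] using abs_det_le_permanent_abs A

theorem abs_det_eq_abs_prod_of_perm {A : Matrix n n R} {d : n → R} {σ : Equiv.Perm n}
    (hA : ∀ c y, A c y = if c = σ y then d y else 0) : |A.det| = |∏ y, d y| := by
  have hdiag : A.submatrix σ (Equiv.refl n) = Matrix.diagonal d := by
    ext i j
    obtain rfl | hij := eq_or_ne i j
    · simp [hA]
    · simp [hA, hij]
  rw [← Matrix.abs_det_submatrix_equiv_equiv σ (Equiv.refl n) A, hdiag, Matrix.det_diagonal]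

theorem stmt_9_general (Q : Matrix n n R) (hQ_nonneg : ∀ c y, 0 ≤ Q c y) (d : n → R)
    (hd : ∀ y, d y = ∑ c, Q c y) (hd_pos : ∀ y, 0 < d y) :
    |Q.det| = ∏ y, d y ↔
      ∃ σ : Equiv.Perm n, ∀ c y, Q c y = if c = σ y then d y else 0 := by
  constructor
  · intro hdet
    have hle : ∏ y, ∑ c, Q c y ≤ Q.permanent := by
      simpa only [hdet, hd] using abs_det_le_permanent_of_nonneg hQ_nonneg
    have hcol (y : n) : ∃ c, 0 < Q c y := by
      obtain ⟨c, -, hc⟩ :=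
        (Finset.sum_pos_iff_of_nonneg fun c _ => hQ_nonneg c y).mp (hd y ▸ hd_pos y)
      exact ⟨c, hc⟩
    obtain ⟨σ, hσ⟩ := exists_perm_iff_eq_of_selections_injective hcol fun f =>
      injective_of_prod_sum_le_permanent hQ_nonneg hle
    have hoff (c y : n) (hc : c ≠ σ y) : Q c y = 0 :=
      (hQ_nonneg c y).eq_of_not_lt' fun hpos => hc ((hσ c y).mp hpos)
    refine ⟨σ, fun c y => ?_⟩
    split_ifs with hc
    · rw [hd, hc, Fintype.sum_eq_single (σ y) fun b hb => hoff b y hb]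
    · exact hoff c y hc
  · rintro ⟨σ, hσ⟩
    rw [abs_det_eq_abs_prod_of_perm hσ, abs_of_pos (Finset.prod_pos fun y _ => hd_pos y)]

end Permanent

theorem stmt_9 (C : ℕ) (Q : Matrix (Fin C) (Fin C) ℝ)
    (hQ_nonneg : ∀ c y, 0 ≤ Q c y)
    (d : Fin C → ℝ)
    (hd : ∀ y, d y = ∑ c, Q c y)
    (hd_pos : ∀ y, 0 < d y) :
    |Q.det| = ∏ y, d y ↔
      ∃ σ : Equiv.Perm (Fin C), ∀ c y, Q c y = if c = σ y then d y else 0 :=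
  stmt_9_general Q hQ_nonneg d hd hd_pos
end

section
/- Let d : Fin C → ℝ be strictly positive with ∑_y d(y) = 1, let D be the diagonal C×C matrix with diagonal entries d(y), let T be a row-stochastic C×C real matrix with det(T) ≠ 0, and let Q be any C×C real matrix with nonnegative entries whose y-th column sums to d(y). Then |det(Q * T)| ≤ |det(D * T)|, with equality if and only if there exists a permutation σ of Fin C such that Q(c, y) = d(y) if c = σ(y) and Q(c, y) = 0 otherwise. -/
/-!
Expanding `∏ j, ∑ i, A i j` over all maps `f : n → n` gives the permanent of `A` plus the terms of
the non-bijective maps, so an absolute value of `det A` is at most the product of the `ℓ¹` norms of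
the columns of `A`. If equality holds and no column vanishes, then some permutation `σ` has a
nonzero term while all non-bijective maps have zero term. Changing `σ` at a single column destroys
bijectivity, so no entry of `A` off the graph of `σ` can be nonzero.
-/

open Finset Function Matrix

variable {n : Type*} [Fintype n]

section CommSemiring

variable {R : Type*} [CommSemiring R]

theorem apply_eq_zero_of_forall_not_bijective_prod_eq_zero [NoZeroDivisors R] [Nontrivial R]
    {A : Matrix n n R} {σ : Equiv.Perm n} (hσ : ∏ j, A (σ j) j ≠ 0)
    (hA : ∀ f : n → n, ¬Bijective f → ∏ j, A (f j) j = 0) {i j : n} (hij : i ≠ σ j) :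
    A i j = 0 := by
  classical
  by_contra hne
  have not_bijective : ¬Bijective (update σ j i) := fun hf ↦ by
    have hj : σ.symm i ≠ j := fun h ↦ hij (by rw [← h, σ.apply_symm_apply])
    exact hj (hf.injective (by rw [update_of_ne hj, update_self, σ.apply_symm_apply]))
  refine prod_ne_zero_iff.2 (fun k _ ↦ ?_) (hA _ not_bijective)
  obtain rfl | hk := eq_or_ne k j
  · rwa [update_self]
  · rw [update_of_ne hk]
    exact prod_ne_zero_iff.1 hσ k (mem_univ k)

variable [DecidableEq n]

theorem prod_sum_col_eq_permanent_add (A : Matrix n n R) :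
    ∏ j, ∑ i, A i j = A.permanent + ∑ f : n → n with ¬Bijective f, ∏ j, A (f j) j := by
  have sum_bijective : ∑ f : n → n with Bijective f, ∏ j, A (f j) j = A.permanent :=
    sum_bij (fun f hf ↦ Equiv.ofBijective f (mem_filter.1 hf).2) (fun _ _ ↦ mem_univ _)
      (fun _ _ _ _ h ↦ congrArg DFunLike.coe h)
      (fun σ _ ↦ ⟨σ, mem_filter.2 ⟨mem_univ _, σ.bijective⟩, Equiv.ext fun _ ↦ rfl⟩)
      (fun _ _ ↦ rfl)
  rw [Fintype.prod_sum fun j i ↦ A i j, ← sum_bijective, sum_filter_add_sum_filter_not]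

variable [PartialOrder R] [IsOrderedRing R] {A : Matrix n n R}

theorem permanent_le_prod_sum_col (hA : ∀ i j, 0 ≤ A i j) :
    A.permanent ≤ ∏ j, ∑ i, A i j := by
  rw [prod_sum_col_eq_permanent_add]
  exact le_add_of_nonneg_right (sum_nonneg fun f _ ↦ prod_nonneg fun j _ ↦ hA (f j) j)

theorem exists_perm_of_prod_sum_col_le_permanent [IsCancelAdd R] [NoZeroDivisors R]
    [Nontrivial R] (hA : ∀ i j, 0 ≤ A i j) (hcol : ∀ j, ∑ i, A i j ≠ 0)
    (h : ∏ j, ∑ i, A i j ≤ A.permanent) :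
    ∃ σ : Equiv.Perm n, ∀ i j, i ≠ σ j → A i j = 0 := by
  have permanent_eq : A.permanent = ∏ j, ∑ i, A i j := (permanent_le_prod_sum_col hA).antisymm h
  have permanent_ne_zero : A.permanent ≠ 0 :=
    permanent_eq ▸ prod_ne_zero_iff.2 fun j _ ↦ hcol j
  obtain ⟨σ, -, hσ⟩ := exists_ne_zero_of_sum_ne_zero permanent_ne_zero
  have sum_not_bijective : ∑ f : n → n with ¬Bijective f, ∏ j, A (f j) j = 0 :=
    add_eq_left.1 ((prod_sum_col_eq_permanent_add A).symm.trans permanent_eq.symm)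
  have prod_not_bijective (f : n → n) (hf : ¬Bijective f) : ∏ j, A (f j) j = 0 :=
    (sum_eq_zero_iff_of_nonneg fun g _ ↦ prod_nonneg fun j _ ↦ hA (g j) j).1
      sum_not_bijective f (mem_filter.2 ⟨mem_univ f, hf⟩)
  exact ⟨σ, fun i j ↦ apply_eq_zero_of_forall_not_bijective_prod_eq_zero hσ prod_not_bijective⟩

end CommSemiring

variable [DecidableEq n]

theorem det_eq_sign_smul_prod_of_forall_ne {R : Type*} [CommRing R] {A : Matrix n n R}
    {σ : Equiv.Perm n} (hA : ∀ i j, i ≠ σ j → A i j = 0) :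
    A.det = Equiv.Perm.sign σ • ∏ j, A (σ j) j := by
  rw [det_apply]
  refine Fintype.sum_eq_single σ fun τ hτ ↦ ?_
  obtain ⟨j, hj⟩ := DFunLike.ne_iff.1 hτ
  exact smul_eq_zero_of_right _ (prod_eq_zero (mem_univ j) (hA (τ j) j hj))

section AbsoluteValue

variable {R S : Type*} [CommRing R] [Nontrivial R] [CommRing S] [LinearOrder S]
  [IsStrictOrderedRing S] (abv : AbsoluteValue R S) (A : Matrix n n R)

theorem abv_det_le_permanent : abv A.det ≤ (A.map abv).permanent :=
  calc
    abv A.det = abv (∑ σ : Equiv.Perm n, Equiv.Perm.sign σ • ∏ j, A (σ j) j) := by rw [det_apply]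
    _ ≤ ∑ σ : Equiv.Perm n, abv (Equiv.Perm.sign σ • ∏ j, A (σ j) j) := abv.sum_le _ _
    _ = (A.map abv).permanent :=
      sum_congr rfl fun σ _ ↦ by
        simp only [abv.map_units_int_smul, abv.map_prod, map_apply]

theorem abv_det_le_prod_sum_abv_col : abv A.det ≤ ∏ j, ∑ i, abv (A i j) :=
  (abv_det_le_permanent abv A).trans (permanent_le_prod_sum_col fun _ _ ↦ abv.nonneg _)

variable {A}

theorem abv_det_eq_prod_sum_abv_col_iff (hcol : ∀ j, ∑ i, abv (A i j) ≠ 0) :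
    abv A.det = ∏ j, ∑ i, abv (A i j) ↔
      ∃ σ : Equiv.Perm n, ∀ i j, i ≠ σ j → A i j = 0 := by
  constructor
  · intro h
    obtain ⟨σ, hσ⟩ := exists_perm_of_prod_sum_col_le_permanent (A := A.map abv)
      (fun _ _ ↦ abv.nonneg _) hcol (h.ge.trans (abv_det_le_permanent abv A))
    exact ⟨σ, fun i j hij ↦ abv.eq_zero.1 (hσ i j hij)⟩
  · rintro ⟨σ, hσ⟩
    rw [det_eq_sign_smul_prod_of_forall_ne hσ, abv.map_units_int_smul, abv.map_prod]
    refine prod_congr rfl fun j _ ↦ ?_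
    rw [Fintype.sum_eq_single (σ j) fun i hij ↦ by rw [hσ i j hij, abv.map_zero]]

end AbsoluteValue

theorem forall_ne_apply_eq_zero_iff_eq_ite {m M : Type*} [AddCommMonoid M] {A : Matrix n m M}
    {g : m → n} {d : m → M} (hcol : ∀ j, ∑ i, A i j = d j) :
    (∀ i j, i ≠ g j → A i j = 0) ↔ ∀ i j, A i j = if i = g j then d j else 0 := by
  refine ⟨fun hA i j ↦ ?_, fun hA i j hij ↦ by rw [hA, if_neg hij]⟩
  split_ifs with hij
  · rw [hij, ← hcol j, Fintype.sum_eq_single (g j) fun k hk ↦ hA k j hk]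
  · exact hA i j hij

theorem stmt_10_general {R : Type*} [CommRing R] [LinearOrder R] [IsStrictOrderedRing R]
    {d : n → R} (hd_pos : ∀ y, 0 < d y) {T : Matrix n n R} (hT_det : T.det ≠ 0)
    {Q : Matrix n n R} (hQ_nonneg : ∀ c y, 0 ≤ Q c y) (hQ_col : ∀ y, ∑ c, Q c y = d y) :
    |(Q * T).det| ≤ |(diagonal d * T).det| ∧
      (|(Q * T).det| = |(diagonal d * T).det| ↔
        ∃ σ : Equiv.Perm n, ∀ c y, Q c y = if c = σ y then d y else 0) := by
  have sum_abs_col (y : n) : ∑ c, |Q c y| = d y := by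
    simp only [abs_of_nonneg (hQ_nonneg _ _), hQ_col]
  have abs_det_le : |Q.det| ≤ ∏ y, d y := by
    simpa only [AbsoluteValue.abs_apply, sum_abs_col] using abv_det_le_prod_sum_abv_col .abs Q
  have abs_det_eq_iff : |Q.det| = ∏ y, d y ↔
      ∃ σ : Equiv.Perm n, ∀ c y, c ≠ σ y → Q c y = 0 := by
    simpa only [AbsoluteValue.abs_apply, sum_abs_col] using
      abv_det_eq_prod_sum_abv_col_iff .abs fun y ↦ (sum_abs_col y).trans_ne (hd_pos y).ne'
  have hT : 0 < |T.det| := abs_pos.2 hT_det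
  rw [det_mul, det_mul, det_diagonal, abs_mul, abs_mul,
    abs_of_pos (prod_pos fun y _ ↦ hd_pos y), mul_le_mul_iff_left₀ hT, mul_left_inj' hT.ne',
    abs_det_eq_iff]
  exact ⟨abs_det_le, exists_congr fun σ ↦ forall_ne_apply_eq_zero_iff_eq_ite hQ_col⟩

theorem stmt_10 (C : ℕ) (d : Fin C → ℝ)
    (hd_pos : ∀ y, 0 < d y)
    (hd_sum : ∑ y, d y = 1)
    (T : Matrix (Fin C) (Fin C) ℝ)
    (hT_nonneg : ∀ i j, 0 ≤ T i j)
    (hT_row : ∀ i, ∑ j, T i j = 1)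
    (hT_det : T.det ≠ 0)
    (Q : Matrix (Fin C) (Fin C) ℝ)
    (hQ_nonneg : ∀ c y, 0 ≤ Q c y)
    (hQ_col : ∀ y, ∑ c, Q c y = d y) :
    |(Q * T).det| ≤ |(Matrix.diagonal d * T).det| ∧
      (|(Q * T).det| = |(Matrix.diagonal d * T).det| ↔
        ∃ σ : Equiv.Perm (Fin C), ∀ c y, Q c y = if c = σ y then d y else 0) :=
  stmt_10_general hd_pos hT_det hQ_nonneg hQ_col
end

section
/- Let Q be a C×C real matrix and let R be a row-stochastic C×C real matrix. Then |det(Rᵀ * Q)| ≤ |det(Q)|. Consequently, for any C×C real matrix T, |det((Rᵀ * Q) * T)| ≤ |det(Q * T)|. -/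
/-!
Expanding the product of the `ℓ¹` norms of the rows of `R` gives one term for every self-map of the
index set; the Leibniz formula for `det R` only involves the permutations among them. Hence
`|det R|` is at most that product, which is `1` when `R` is row-stochastic, and everything else is
multiplicativity of the determinant.
-/

open Matrix

section

variable {n K S : Type*} [Fintype n] [DecidableEq n]

theorem sum_perm_prod_le_prod_sum [CommSemiring S] [PartialOrder S] [IsOrderedRing S]
    {f : n → n → S} (hf : ∀ i j, 0 ≤ f i j) :
    ∑ σ : Equiv.Perm n, ∏ i, f i (σ i) ≤ ∏ i, ∑ j, f i j :=
  calc ∑ σ : Equiv.Perm n, ∏ i, f i (σ i)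
      = ∑ g ∈ Finset.univ.map ⟨((⇑) : Equiv.Perm n → n → n), DFunLike.coe_injective⟩,
          ∏ i, f i (g i) := by
        simp only [Finset.sum_map, Function.Embedding.coeFn_mk]
    _ ≤ ∑ g : n → n, ∏ i, f i (g i) :=
        Finset.sum_le_univ_sum_of_nonneg fun g ↦ Finset.prod_nonneg fun i _ ↦ hf i (g i)
    _ = ∏ i, ∑ j, f i j := (Fintype.prod_sum f).symm

variable [CommRing K] [Nontrivial K] [CommRing S] [LinearOrder S] [IsStrictOrderedRing S]

theorem abv_det_le_prod_sum_abv (abv : AbsoluteValue K S) (A : Matrix n n K) :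
    abv A.det ≤ ∏ i, ∑ j, abv (A i j) :=
  calc abv A.det = abv (∑ σ : Equiv.Perm n, Equiv.Perm.sign σ • ∏ i, A i (σ i)) := by
        simp only [← det_transpose A, det_apply, transpose_apply]
    _ ≤ ∑ σ : Equiv.Perm n, abv (Equiv.Perm.sign σ • ∏ i, A i (σ i)) := abv.sum_le _ _
    _ = ∑ σ : Equiv.Perm n, ∏ i, abv (A i (σ i)) := by
        simp only [abv.map_units_int_smul, abv.map_prod]
    _ ≤ ∏ i, ∑ j, abv (A i j) := sum_perm_prod_le_prod_sum fun _ _ ↦ abv.nonneg _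

theorem abv_det_transpose_mul_le (abv : AbsoluteValue K S) {R : Matrix n n K}
    (hR : ∀ i, ∑ j, abv (R i j) ≤ 1) (Q : Matrix n n K) :
    abv (Rᵀ * Q).det ≤ abv Q.det := by
  have det_le_one : abv R.det ≤ 1 :=
    (abv_det_le_prod_sum_abv abv R).trans <|
      Finset.prod_le_one (fun _ _ ↦ Finset.sum_nonneg fun _ _ ↦ abv.nonneg _) fun i _ ↦ hR i
  rw [det_mul, det_transpose, abv.map_mul]
  exact mul_le_of_le_one_left (abv.nonneg _) det_le_one

theorem stmt_11_general (abv : AbsoluteValue K S) (Q : Matrix n n K) {R : Matrix n n K}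
    (hR : ∀ i, ∑ j, abv (R i j) ≤ 1) :
    abv (Rᵀ * Q).det ≤ abv Q.det ∧
      ∀ T : Matrix n n K, abv (Rᵀ * Q * T).det ≤ abv (Q * T).det :=
  ⟨abv_det_transpose_mul_le abv hR Q, fun T ↦ by
    simpa only [Matrix.mul_assoc] using abv_det_transpose_mul_le abv hR (Q * T)⟩

end

theorem stmt_11 (C : ℕ) (Q R : Matrix (Fin C) (Fin C) ℝ)
    (hR_nonneg : ∀ i j, 0 ≤ R i j)
    (hR_row : ∀ i, ∑ j, R i j = 1) :
    |(R.transpose * Q).det| ≤ |Q.det| ∧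
      ∀ T : Matrix (Fin C) (Fin C) ℝ,
        |((R.transpose * Q) * T).det| ≤ |(Q * T).det| :=
  stmt_11_general AbsoluteValue.abs Q fun i ↦ by
    simp only [AbsoluteValue.abs_apply, abs_of_nonneg (hR_nonneg i _), hR_row i, le_refl]
end

section
/- Define the Shannon mutual information of a 2×2 real matrix P with positive entries summing to 1 as MI(P) = ∑_{i,j} P(i,j) · log(P(i,j) / (r(i) · s(j))), where r(i) = ∑_j P(i,j) and s(j) = ∑_i P(i,j). Let Q1 = [[0.1, 0.4], [0.2, 0.3]], Q2 = [[0.2, 0.6], [0.1, 0.1]], and T = [[0.8, 0.2], [0.4, 0.6]]. Then MI(Q1) > MI(Q2) while MI(Q1 * T) < MI(Q2 * T). -/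
noncomputable def MI (P : Matrix (Fin 2) (Fin 2) ℝ) : ℝ :=
  ∑ i, ∑ j, P i j * Real.log (P i j / ((∑ j', P i j') * (∑ i', P i' j)))

section ContingencyTable

/-!
If `P` is the empirical distribution of a contingency table `A` of `N` observations, then
`exp (N * MI P)` is the likelihood ratio of `A` against independence, a rational number. Both
matrices being compared can be realised with the same `N` (`10` before and `50` after applying the
noise), so comparing mutual informations amounts to comparing two rational numbers.
-/

variable {m n : Type*} [Fintype m] [Fintype n]

/-- The number of observations recorded in the contingency table `A`. -/
def sampleSize (A : Matrix m n ℕ) : ℕ :=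
  ∑ i, ∑ j, A i j

/-- The joint distribution of relative frequencies of the contingency table `A`; it is the zero
matrix when `A` is empty. -/
noncomputable def empiricalDist (A : Matrix m n ℕ) : Matrix m n ℝ :=
  A.map fun k ↦ (k : ℝ) / sampleSize A

/-- The density at `(i, j)` of the empirical distribution of `A` with respect to the product of its
marginals, with the division by the sample size cleared. -/
noncomputable def dependenceRatio (A : Matrix m n ℕ) (i : m) (j : n) : ℝ :=
  sampleSize A * A i j / ((∑ l, (A i l : ℝ)) * ∑ k, (A k j : ℝ))

/-- The likelihood ratio of the contingency table `A`: its maximal likelihood over all joint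
distributions, divided by its maximal likelihood over product distributions. -/
noncomputable def likelihoodRatio (A : Matrix m n ℕ) : ℝ :=
  ∏ i, ∏ j, dependenceRatio A i j ^ A i j

theorem empiricalDist_div_marginals (A : Matrix m n ℕ) (i : m) (j : n) :
    empiricalDist A i j / ((∑ l, empiricalDist A i l) * ∑ k, empiricalDist A k j) =
      dependenceRatio A i j := by
  simp only [empiricalDist, dependenceRatio, Matrix.map_apply, ← Finset.sum_div]
  rcases eq_or_ne (sampleSize A : ℝ) 0 with hN | hN
  · simp [hN]
  · field_simp

theorem sampleSize_mul_empiricalDist (A : Matrix m n ℕ) (i : m) (j : n) :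
    sampleSize A * empiricalDist A i j = A i j := by
  refine mul_div_cancel_of_imp' fun hN ↦ ?_
  have hA : sampleSize A = 0 := by exact_mod_cast hN
  simp only [sampleSize, Finset.sum_eq_zero_iff, Finset.mem_univ, true_imp_iff] at hA
  simp [hA i j]

theorem dependenceRatio_pos {A : Matrix m n ℕ} {i : m} {j : n} (hA : 0 < A i j) :
    0 < dependenceRatio A i j := by
  have hA' : (0 : ℝ) < A i j := Nat.cast_pos.2 hA
  have hrow : 0 < ∑ l, (A i l : ℝ) :=
    Finset.sum_pos' (fun _ _ ↦ Nat.cast_nonneg _) ⟨j, Finset.mem_univ j, hA'⟩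
  have hcol : 0 < ∑ k, (A k j : ℝ) :=
    Finset.sum_pos' (fun _ _ ↦ Nat.cast_nonneg _) ⟨i, Finset.mem_univ i, hA'⟩
  have hsize : 0 < sampleSize A :=
    Finset.sum_pos' (fun _ _ ↦ Nat.zero_le _) ⟨i, Finset.mem_univ i,
      Finset.sum_pos' (fun _ _ ↦ Nat.zero_le _) ⟨j, Finset.mem_univ j, hA⟩⟩
  unfold dependenceRatio
  positivity

theorem dependenceRatio_pow_pos (A : Matrix m n ℕ) (i : m) (j : n) :
    0 < dependenceRatio A i j ^ A i j := by
  rcases (A i j).eq_zero_or_pos with hA | hA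
  · simp [hA]
  · exact pow_pos (dependenceRatio_pos hA) _

theorem likelihoodRatio_pos (A : Matrix m n ℕ) : 0 < likelihoodRatio A :=
  Finset.prod_pos fun i _ ↦ Finset.prod_pos fun j _ ↦ dependenceRatio_pow_pos A i j

theorem log_likelihoodRatio (A : Matrix m n ℕ) :
    Real.log (likelihoodRatio A) = ∑ i, ∑ j, A i j * Real.log (dependenceRatio A i j) := by
  have hpow (i : m) (j : n) := (dependenceRatio_pow_pos A i j).ne'
  rw [likelihoodRatio, Real.log_prod fun i _ ↦ Finset.prod_ne_zero_iff.2 fun j _ ↦ hpow i j]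
  refine Finset.sum_congr rfl fun i _ ↦ ?_
  rw [Real.log_prod fun j _ ↦ hpow i j]
  simp only [Real.log_pow]

end ContingencyTable

theorem sampleSize_mul_MI_empiricalDist (A : Matrix (Fin 2) (Fin 2) ℕ) :
    sampleSize A * MI (empiricalDist A) = Real.log (likelihoodRatio A) := by
  simp only [MI, empiricalDist_div_marginals, log_likelihoodRatio]
  simp only [Finset.mul_sum, ← mul_assoc, sampleSize_mul_empiricalDist]

theorem MI_empiricalDist_lt_of_likelihoodRatio_lt {A B : Matrix (Fin 2) (Fin 2) ℕ}
    (hsize : sampleSize A = sampleSize B) (hlt : likelihoodRatio A < likelihoodRatio B) :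
    MI (empiricalDist A) < MI (empiricalDist B) := by
  have hlog := Real.log_lt_log (likelihoodRatio_pos A) hlt
  rw [← sampleSize_mul_MI_empiricalDist, ← sampleSize_mul_MI_empiricalDist, hsize] at hlog
  exact lt_of_mul_lt_mul_left hlog (Nat.cast_nonneg _)

theorem sampleSize_fin_two (a b c d : ℕ) : sampleSize !![a, b; c, d] = a + b + c + d := by
  simp [sampleSize, add_assoc]

theorem empiricalDist_fin_two (a b c d : ℕ) :
    empiricalDist !![a, b; c, d] =
      !![a / (a + b + c + d : ℝ), b / (a + b + c + d : ℝ);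
        c / (a + b + c + d : ℝ), d / (a + b + c + d : ℝ)] := by
  ext i j
  fin_cases i <;> fin_cases j <;> simp [empiricalDist, sampleSize_fin_two]

theorem likelihoodRatio_fin_two (a b c d : ℕ) :
    likelihoodRatio !![a, b; c, d] =
      ((a + b + c + d) * a / ((a + b) * (a + c)) : ℝ) ^ a *
        ((a + b + c + d) * b / ((a + b) * (b + d)) : ℝ) ^ b *
        (((a + b + c + d) * c / ((c + d) * (a + c)) : ℝ) ^ c *
        ((a + b + c + d) * d / ((c + d) * (b + d)) : ℝ) ^ d) := by
  simp [likelihoodRatio, dependenceRatio, sampleSize_fin_two]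

theorem stmt_14 :
    MI !![0.1, 0.4; 0.2, 0.3] > MI !![0.2, 0.6; 0.1, 0.1] ∧
      MI (!![0.1, 0.4; 0.2, 0.3] * !![0.8, 0.2; 0.4, 0.6]) <
        MI (!![0.2, 0.6; 0.1, 0.1] * !![0.8, 0.2; 0.4, 0.6]) := by
  have hQ₁ : !![0.1, 0.4; 0.2, 0.3] = empiricalDist !![1, 4; 2, 3] := by
    norm_num [empiricalDist_fin_two]
  have hQ₂ : !![0.2, 0.6; 0.1, 0.1] = empiricalDist !![2, 6; 1, 1] := by
    norm_num [empiricalDist_fin_two]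
  have hQ₁T : !![0.1, 0.4; 0.2, 0.3] * !![0.8, 0.2; 0.4, 0.6] =
      empiricalDist !![12, 13; 14, 11] := by
    norm_num [empiricalDist_fin_two, Matrix.mul_fin_two]
  have hQ₂T : !![0.2, 0.6; 0.1, 0.1] * !![0.8, 0.2; 0.4, 0.6] =
      empiricalDist !![20, 20; 6, 4] := by
    norm_num [empiricalDist_fin_two, Matrix.mul_fin_two]
  rw [hQ₁T, hQ₂T, hQ₁, hQ₂]
  constructor <;> apply MI_empiricalDist_lt_of_likelihoodRatio_lt
  · simp only [sampleSize_fin_two]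
  · norm_num [likelihoodRatio_fin_two]
  · simp only [sampleSize_fin_two]
  · norm_num [likelihoodRatio_fin_two]
end
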